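/- arXiv:2105.00413 — 2 statements merged into one kernel-verified Lean document; each statement's English description precedes it below -/
import Mathlib

section
/- If M is an (n,k)-weak cotorsion right R-module and D is an m-th cosyzygy of M (i.e., the final cokernel of an injective resolution of M truncated after m terms), then D is (n, m+k)-weak cotorsion. -/
/-!
Common definitions for formalizing "(n,k)-weak cotorsion modules" over an arbitrary
(not necessarily commutative) ring `R`.  Left `R`-modules are objects of
`ModuleCat R`, right `R`-modules are objects of `ModuleCat Rᵐᵒᵖ`.

Since Mathlib does not provide `Tor` of a right module with a left module over a
noncommutative ring, we encode the vanishing of `Tor_i^R(N, M)` (for `N` a right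
module and `M` a left module) by the equivalent condition
`Ext^i_{Rᵐᵒᵖ}(N, M⋆) = 0`, where `M⋆ = Hom_ℤ(M, ℚ/ℤ)` is the character module
(a right module).  This is equivalent because `ℚ/ℤ` is an injective cogenerator:
`Ext^i_{Rᵐᵒᵖ}(N, M⋆) ≅ (Tor_i^R(N, M))⋆`, and an abelian group vanishes iff its
character group does.
-/

open CategoryTheory

universe u

noncomputable section

/-- The character group `Hom_ℤ(N, ℚ/ℤ)`. -/
def CharGroup (N : Type u) [AddCommGroup N] : Type u := N →+ AddCircle (1 : ℚ)

instance (N : Type u) [AddCommGroup N] : AddCommGroup (CharGroup N) :=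
  inferInstanceAs (AddCommGroup (N →+ AddCircle (1 : ℚ)))

namespace CharGroup

variable {N : Type u} [AddCommGroup N]

/-- View an element of the character group as an additive monoid hom. -/
def toHom (f : CharGroup N) : N →+ AddCircle (1 : ℚ) := f

/-- Build an element of the character group from an additive monoid hom. -/
def ofHom (f : N →+ AddCircle (1 : ℚ)) : CharGroup N := f

theorem hom_ext {f g : CharGroup N} (h : ∀ m, toHom f m = toHom g m) : f = g :=
  AddMonoidHom.ext h

end CharGroup

open CharGroup in
/-- Left module structure on the character group of a right module. -/
instance charGroupModuleLeft (R : Type u) [Ring R] (N : Type u) [AddCommGroup N]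
    [Module Rᵐᵒᵖ N] : Module R (CharGroup N) where
  smul r f := ofHom ((toHom f).comp
    (AddMonoidHom.mk' (fun m => MulOpposite.op r • m) (fun a b => smul_add _ a b)))
  one_smul f := hom_ext fun m => by
    show toHom f (MulOpposite.op (1 : R) • m) = toHom f m
    rw [MulOpposite.op_one, one_smul]
  mul_smul r s f := hom_ext fun m => by
    show toHom f (MulOpposite.op (r * s) • m)
      = toHom f (MulOpposite.op s • MulOpposite.op r • m)
    rw [MulOpposite.op_mul, mul_smul]
  smul_zero r := CharGroup.hom_ext fun m => rfl
  smul_add r f g := CharGroup.hom_ext fun m => rfl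
  add_smul r s f := hom_ext fun m => by
    show toHom f (MulOpposite.op (r + s) • m)
      = toHom f (MulOpposite.op r • m) + toHom f (MulOpposite.op s • m)
    rw [MulOpposite.op_add, add_smul, map_add]
  zero_smul f := hom_ext fun m => by
    show toHom f (MulOpposite.op (0 : R) • m) = 0
    rw [MulOpposite.op_zero, zero_smul, map_zero]

open CharGroup in
/-- Right module structure on the character group of a left module. -/
instance charGroupModuleRight (R : Type u) [Ring R] (N : Type u) [AddCommGroup N]
    [Module R N] : Module Rᵐᵒᵖ (CharGroup N) where
  smul r f := ofHom ((toHom f).comp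
    (AddMonoidHom.mk' (fun m => r.unop • m) (fun a b => smul_add _ a b)))
  one_smul f := hom_ext fun m => by
    show toHom f ((1 : Rᵐᵒᵖ).unop • m) = toHom f m
    rw [MulOpposite.unop_one, one_smul]
  mul_smul r s f := hom_ext fun m => by
    show toHom f ((r * s).unop • m) = toHom f (s.unop • r.unop • m)
    rw [MulOpposite.unop_mul, mul_smul]
  smul_zero r := CharGroup.hom_ext fun m => rfl
  smul_add r f g := CharGroup.hom_ext fun m => rfl
  add_smul r s f := hom_ext fun m => by
    show toHom f ((r + s).unop • m) = toHom f (r.unop • m) + toHom f (s.unop • m)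
    rw [MulOpposite.unop_add, add_smul, map_add]
  zero_smul f := hom_ext fun m => by
    show toHom f ((0 : Rᵐᵒᵖ).unop • m) = 0
    rw [MulOpposite.unop_zero, zero_smul, map_zero]

variable (R : Type u) [Ring R]

/-- `extVanish S i A B` says that `Ext^i_S(A, B) = 0`. -/
def extVanish (S : Type u) [Ring S] (i : ℕ) (A B : ModuleCat.{u} S) : Prop :=
  Subsingleton (((Ext ℤ (ModuleCat.{u} S) i).obj (Opposite.op A)).obj B)

/-- The character module of a right `R`-module, as a left `R`-module. -/
def charLeft (N : ModuleCat.{u} Rᵐᵒᵖ) : ModuleCat.{u} R :=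
  ModuleCat.of R (CharGroup N)

/-- The character module of a left `R`-module, as a right `R`-module. -/
def charRight (M : ModuleCat.{u} R) : ModuleCat.{u} Rᵐᵒᵖ :=
  ModuleCat.of Rᵐᵒᵖ (CharGroup M)

/-- `torVanish R i N M` encodes `Tor_i^R(N, M) = 0` for a right module `N` and a
left module `M`, via the character module duality
`Ext^i_R(M, N⋆) ≅ (Tor_i^R(N, M))⋆`. -/
def torVanish (i : ℕ) (N : ModuleCat.{u} Rᵐᵒᵖ) (M : ModuleCat.{u} R) : Prop :=
  extVanish R i M (charLeft R N)

/-- `K` is a special super finitely presented `S`-module (for the parameter `n`):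
`K` is the image of `F_n → F_{n-1}` in a projective resolution
`⋯ → F_{n+1} → F_n → ⋯ → F_0 → U → 0` of some module `U` in which `F_i` is finitely
generated projective for all `i ≥ n`.  (For `n = 0` the distinguished module is `U`
itself, matching `Ext^{n+1}(U, -) ≅ Ext^1(K_{n-1}, -)`.) -/
def IsSpecialSFP (S : Type u) [Ring S] (n : ℕ) (K : ModuleCat.{u} S) : Prop :=
  ∃ (U : ModuleCat.{u} S) (F : ℕ → ModuleCat.{u} S)
    (d : ∀ i, F (i + 1) →ₗ[S] F i) (π : F 0 →ₗ[S] U),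
      (∀ i, Module.Projective S (F i)) ∧
      (∀ i, n ≤ i → Module.Finite S (F i)) ∧
      Function.Surjective π ∧ Function.Exact (d 0) π ∧
      (∀ i, Function.Exact (d (i + 1)) (d i)) ∧
      (if n = 0 then Nonempty ((K : Type u) ≃ₗ[S] U)
       else Nonempty ((K : Type u) ≃ₗ[S] LinearMap.range (d (n - 1))))

/-- The `n`-weak injective dimension of a left `S`-module `M` is at most `k`. -/
def nwidLE (S : Type u) [Ring S] (n k : ℕ) (M : ModuleCat.{u} S) : Prop :=
  ∀ K : ModuleCat.{u} S, IsSpecialSFP S n K → extVanish S (k + 1) K M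

/-- The `n`-weak flat dimension of a right `R`-module `N` is at most `k`:
`Tor_{k+1}^R(N, K) = 0` for every special super finitely presented left module `K`. -/
def nwfdLE (n k : ℕ) (N : ModuleCat.{u} Rᵐᵒᵖ) : Prop :=
  ∀ K : ModuleCat.{u} R, IsSpecialSFP R n K → torVanish R (k + 1) N K

/-- A right `R`-module `M` is `(n,k)`-weak cotorsion if `Ext^1(N, M) = 0` for every
right module `N` of `n`-weak flat dimension at most `k`. -/
def IsNKWeakCotorsion (n k : ℕ) (M : ModuleCat.{u} Rᵐᵒᵖ) : Prop :=
  ∀ N : ModuleCat.{u} Rᵐᵒᵖ, nwfdLE R n k N → extVanish Rᵐᵒᵖ 1 N M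

/-- Projective dimension at most `k`, via Ext vanishing. -/
def pdLE (S : Type u) [Ring S] (k : ℕ) (K : ModuleCat.{u} S) : Prop :=
  ∀ M : ModuleCat.{u} S, extVanish S (k + 1) K M

/-- Injective dimension at most `k`, via Ext vanishing. -/
def idLE (S : Type u) [Ring S] (k : ℕ) (M : ModuleCat.{u} S) : Prop :=
  ∀ N : ModuleCat.{u} S, extVanish S (k + 1) N M

/-- Flat dimension of a right module at most `k`, via Tor vanishing. -/
def fdLE (k : ℕ) (N : ModuleCat.{u} Rᵐᵒᵖ) : Prop :=
  ∀ A : ModuleCat.{u} R, torVanish R (k + 1) N A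

/-- `l.n.sp.gldim(R) ≤ k` : every special super finitely presented left module has
projective dimension at most `k`. -/
def lnspGldimLE (n k : ℕ) : Prop :=
  ∀ K : ModuleCat.{u} R, IsSpecialSFP R n K → pdLE R k K

/-- `w.gl.dim(R) ≤ k`. -/
def wGldimLE (k : ℕ) : Prop :=
  ∀ N : ModuleCat.{u} Rᵐᵒᵖ, fdLE R k N

/-- A right `R`-module `M` is `k`-cotorsion if `Ext^1(F, M) = 0` for every right
module `F` of flat dimension at most `k`. -/
def IsKCotorsion (k : ℕ) (M : ModuleCat.{u} Rᵐᵒᵖ) : Prop :=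
  ∀ F : ModuleCat.{u} Rᵐᵒᵖ, fdLE R k F → extVanish Rᵐᵒᵖ 1 F M

/-- `φ : E → D` is a `𝒞`-precover of `D`. -/
def IsPrecover (S : Type u) [Ring S] (𝒞 : ModuleCat.{u} S → Prop)
    (E D : ModuleCat.{u} S) (φ : E →ₗ[S] D) : Prop :=
  𝒞 E ∧ ∀ F : ModuleCat.{u} S, 𝒞 F → ∀ g : F →ₗ[S] D, ∃ h : F →ₗ[S] E, φ ∘ₗ h = g

/-- `φ : E → D` is a `𝒞`-cover of `D`. -/
def IsCover (S : Type u) [Ring S] (𝒞 : ModuleCat.{u} S → Prop)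
    (E D : ModuleCat.{u} S) (φ : E →ₗ[S] D) : Prop :=
  IsPrecover S 𝒞 E D φ ∧ ∀ g : E →ₗ[S] E, φ ∘ₗ g = φ → Function.Bijective g

/-- `f : X → F` is a `𝒞`-preenvelope of `X`. -/
def IsPreenvelope (S : Type u) [Ring S] (𝒞 : ModuleCat.{u} S → Prop)
    (X F : ModuleCat.{u} S) (f : X →ₗ[S] F) : Prop :=
  𝒞 F ∧ ∀ F' : ModuleCat.{u} S, 𝒞 F' → ∀ g : X →ₗ[S] F', ∃ h : F →ₗ[S] F', h ∘ₗ f = g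

/-- A module is reduced if it has no nonzero injective submodules. -/
def IsReducedModule (S : Type u) [Ring S] (M : ModuleCat.{u} S) : Prop :=
  ∀ N : Submodule S M, Module.Injective S N → N = ⊥

/-- `D` is an `m`-th cosyzygy of `M`: there is an exact sequence
`0 → M → E^0 → ⋯ → E^{m-1} → D → 0` with each `E^i` injective. -/
def IsCosyzygy (S : Type u) [Ring S] : ℕ → ModuleCat.{u} S → ModuleCat.{u} S → Prop
  | 0, M, D => Nonempty ((M : Type u) ≃ₗ[S] D)
  | m + 1, M, D => ∃ (C E : ModuleCat.{u} S), IsCosyzygy S m M C ∧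
      Module.Injective S E ∧
      ∃ (ι : C →ₗ[S] E) (p : E →ₗ[S] D),
        Function.Injective ι ∧ Function.Surjective p ∧ Function.Exact ι p


/-- A left `R`-module `F` is flat: `Tor_1(A, F) = 0` for every right module `A`
(encoded via character duality, as above). -/
def IsFlatModule (R : Type u) [Ring R] (F : ModuleCat.{u} R) : Prop :=
  ∀ A : ModuleCat.{u} Rᵐᵒᵖ, torVanish R 1 A F

end

section Helpers

open Limits

theorem extVanish_iff (S : Type u) [Ring S] (i : ℕ) (A B : ModuleCat.{u} S)
    (P : ProjectiveResolution A) :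
    extVanish S (i + 1) A B ↔
      ∀ f : P.complex.X (i + 1) ⟶ B, P.complex.d (i + 2) (i + 1) ≫ f = 0 →
        ∃ g : P.complex.X i ⟶ B, P.complex.d (i + 1) i ≫ g = f := by
  unfold extVanish
  rw [← ModuleCat.isZero_iff_subsingleton, (P.isoExt (R := ℤ) (i + 1) B).isZero_iff,
    ← HomologicalComplex.exactAt_iff_isZero_homology,
    HomologicalComplex.exactAt_iff' _ i (i + 1) (i + 2) (by simp) (by simp),
    ShortComplex.moduleCat_exact_iff]
  exact Iff.rfl

theorem extVanish_of_iso (S : Type u) [Ring S] (i : ℕ) (A : ModuleCat.{u} S)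
    {B C : ModuleCat.{u} S} (e : B ≅ C) (h : extVanish S i A B) : extVanish S i A C := by
  unfold extVanish at *
  rw [← ModuleCat.isZero_iff_subsingleton] at *
  exact h.of_iso (((Ext ℤ (ModuleCat.{u} S) i).obj (Opposite.op A)).mapIso e.symm)

theorem extVanish_injective (S : Type u) [Ring S] (i : ℕ) (A B : ModuleCat.{u} S)
    [Injective B] : extVanish S (i + 1) A B := by
  rw [extVanish_iff S i A B (ProjectiveResolution.of A)]
  intro f hf
  exact ⟨((ProjectiveResolution.of A).exact_succ i).descToInjective f hf,
    ((ProjectiveResolution.of A).exact_succ i).comp_descToInjective f hf⟩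

theorem extVanish_shift (S : Type u) [Ring S] (i : ℕ) (A : ModuleCat.{u} S)
    (T : ShortComplex (ModuleCat.{u} S)) (hT : T.ShortExact) [Injective T.X₂]
    (h : extVanish S (i + 2) A T.X₁) : extVanish S (i + 1) A T.X₃ := by
  have := hT.mono_f
  have := hT.epi_g
  let P := ProjectiveResolution.of A
  rw [extVanish_iff S (i + 1) A _ P] at h
  rw [extVanish_iff S i A _ P]
  intro z hz
  let z' := Projective.factorThru z T.g
  have hz' : z' ≫ T.g = z := Projective.factorThru_comp z T.g
  have h1 : (P.complex.d (i + 2) (i + 1) ≫ z') ≫ T.g = 0 := by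
    rw [Category.assoc, hz', hz]
  let c := hT.exact.lift _ h1
  have hc : c ≫ T.f = P.complex.d (i + 2) (i + 1) ≫ z' := hT.exact.lift_f _ h1
  obtain ⟨w, hw⟩ := h c (by
    rw [← cancel_mono T.f, Category.assoc, hc, ← Category.assoc,
      HomologicalComplex.d_comp_d, zero_comp, zero_comp])
  obtain ⟨v, hv⟩ := (extVanish_iff S i A T.X₂ P).1 (extVanish_injective S i A T.X₂)
    (z' - w ≫ T.f) (by
      rw [Preadditive.comp_sub, ← Category.assoc]
      erw [hw]
      rw [hc, sub_self])
  refine ⟨v ≫ T.g, ?_⟩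
  rw [← Category.assoc, hv, Preadditive.sub_comp, hz', Category.assoc, T.zero, comp_zero,
    sub_zero]

theorem lift_of_extVanish (S : Type u) [Ring S] (A : ModuleCat.{u} S)
    (T : ShortComplex (ModuleCat.{u} S)) (hT : T.ShortExact)
    (h : extVanish S 1 A T.X₁) (f : A ⟶ T.X₃) : ∃ g : A ⟶ T.X₂, g ≫ T.g = f := by
  have := hT.mono_f
  have := hT.epi_g
  let P := ProjectiveResolution.of A
  rw [extVanish_iff S 0 A _ P] at h
  let q : P.complex.X 0 ⟶ A := P.π.f 0
  have : Epi q := inferInstanceAs (Epi (P.π.f 0))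
  have hdq : P.complex.d 1 0 ≫ q = 0 := P.complex_d_comp_π_f_zero
  let z' := Projective.factorThru (q ≫ f) T.g
  have hz' : z' ≫ T.g = q ≫ f := Projective.factorThru_comp _ T.g
  have h1 : (P.complex.d 1 0 ≫ z') ≫ T.g = 0 := by
    rw [Category.assoc, hz', ← Category.assoc, hdq, zero_comp]
  let c := hT.exact.lift _ h1
  have hc : c ≫ T.f = P.complex.d 1 0 ≫ z' := hT.exact.lift_f _ h1
  obtain ⟨w, hw⟩ := h c (by
    rw [← cancel_mono T.f, Category.assoc, hc, ← Category.assoc,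
      HomologicalComplex.d_comp_d, zero_comp, zero_comp])
  have h2 : P.complex.d 1 0 ≫ (z' - w ≫ T.f) = 0 := by
    rw [Preadditive.comp_sub, ← Category.assoc]
    erw [hw]
    rw [hc, sub_self]
  have hex : (ShortComplex.mk _ _ hdq).Exact := P.exact₀
  have : Epi (ShortComplex.mk _ _ hdq).g := ‹Epi q›
  refine ⟨hex.desc _ h2, ?_⟩
  rw [← cancel_epi q]
  have h3 : q ≫ hex.desc _ h2 = z' - w ≫ T.f := hex.g_desc _ h2
  rw [← Category.assoc, h3, Preadditive.sub_comp, hz', Category.assoc, T.zero, comp_zero,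
    sub_zero]

theorem exists_syzygy (S : Type u) [Ring S] (N : ModuleCat.{u} S) :
    ∃ T : ShortComplex (ModuleCat.{u} S), T.ShortExact ∧ Projective T.X₂ ∧ T.X₃ = N ∧
      ∀ B : ModuleCat.{u} S, (∀ f : T.X₁ ⟶ B, ∃ g : T.X₂ ⟶ B, T.f ≫ g = f) →
        extVanish S 1 N B := by
  let P := ProjectiveResolution.of N
  let q : P.complex.X 0 ⟶ N := P.π.f 0
  have : Epi q := inferInstanceAs (Epi (P.π.f 0))
  have hdq : P.complex.d 1 0 ≫ q = 0 := P.complex_d_comp_π_f_zero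
  have hex : (ShortComplex.mk _ _ hdq).Exact := P.exact₀
  let l : P.complex.X 1 ⟶ kernel q := kernel.lift q _ hdq
  have hl : l ≫ kernel.ι q = P.complex.d 1 0 := kernel.lift_ι q _ hdq
  have hepi : Epi l := hex.epi_kernelLift
  have hdl : P.complex.d 2 1 ≫ l = 0 := by
    rw [← cancel_mono (kernel.ι q), Category.assoc, hl, HomologicalComplex.d_comp_d, zero_comp]
  have hex1 : (ShortComplex.mk _ _ hdl).Exact := by
    let φ : ShortComplex.mk _ _ hdl ⟶ ShortComplex.mk _ _ (P.complex.d_comp_d 2 1 0) :=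
      { τ₁ := 𝟙 _, τ₂ := 𝟙 _, τ₃ := kernel.ι q
        comm₁₂ := by simp
        comm₂₃ := by simp [hl] }
    have : Epi φ.τ₁ := inferInstanceAs (Epi (𝟙 _))
    have : IsIso φ.τ₂ := inferInstanceAs (IsIso (𝟙 _))
    have : Mono φ.τ₃ := inferInstanceAs (Mono (kernel.ι q))
    exact (ShortComplex.exact_iff_of_epi_of_isIso_of_mono φ).2 (P.exact_succ 0)
  have : Epi (ShortComplex.mk _ _ hdl).g := hepi
  refine ⟨ShortComplex.mk (kernel.ι q) q (kernel.condition q),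
    ShortComplex.ShortExact.mk' (ShortComplex.exact_kernel q) inferInstance inferInstance,
    P.projective 0, rfl, fun B h => ?_⟩
  rw [extVanish_iff S 0 _ _ P]
  intro z hz
  obtain ⟨g, hg⟩ := h (hex1.desc z hz)
  refine ⟨g, ?_⟩
  have h3 : l ≫ hex1.desc z hz = z := hex1.g_desc z hz
  rw [← h3, ← hg, ← Category.assoc]
  exact congrArg (· ≫ g) hl.symm

theorem charExtend {X Y : Type u} [AddCommGroup X] [AddCommGroup Y] (f : X →+ Y)
    (hf : Function.Injective f) (c : X →+ AddCircle (1 : ℚ)) :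
    ∃ c' : Y →+ AddCircle (1 : ℚ), ∀ x, c' (f x) = c x := by
  obtain ⟨c', h⟩ := CharacterModule.dual_surjective_of_injective f.toIntLinearMap hf c
  exact ⟨c', fun x => DFunLike.congr_fun h x⟩

open CharGroup in
/-- The dual of a map of right modules. -/
noncomputable def charMap (R : Type u) [Ring R] {A B : ModuleCat.{u} Rᵐᵒᵖ} (f : A ⟶ B) :
    charLeft R B ⟶ charLeft R A :=
  ModuleCat.ofHom (X := CharGroup B) (Y := CharGroup A)
    { toFun := fun c => ofHom ((toHom c).comp f.hom.toAddMonoidHom)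
      map_add' := fun _ _ => rfl
      map_smul' := fun r c => hom_ext fun a => by
        show toHom c (MulOpposite.op r • f.hom a) = toHom c (f.hom (MulOpposite.op r • a))
        rw [f.hom.map_smul] }

open CharGroup in
/-- The dual of a left-module map into a character module. -/
noncomputable def charAdj (R : Type u) [Ring R] {X : Type u} [AddCommGroup X] [Module R X]
    {P : Type u} [AddCommGroup P] [Module Rᵐᵒᵖ P] (g : X →ₗ[R] CharGroup P) :
    P →ₗ[Rᵐᵒᵖ] CharGroup X where
  toFun p := ofHom (AddMonoidHom.mk' (fun x => toHom (g x) p) (fun a b => by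
    rw [map_add]; rfl))
  map_add' p q := hom_ext fun x => (toHom (g x)).map_add p q
  map_smul' r p := hom_ext fun x => by
    show toHom (g x) (r • p) = toHom (g (r.unop • x)) p
    rw [g.map_smul]; rfl

open CharGroup in
/-- The dual of a right-module map into a character module. -/
noncomputable def charAdj' (R : Type u) [Ring R] {X : Type u} [AddCommGroup X] [Module R X]
    {P : Type u} [AddCommGroup P] [Module Rᵐᵒᵖ P] (g : P →ₗ[Rᵐᵒᵖ] CharGroup X) :
    X →ₗ[R] CharGroup P where
  toFun p := ofHom (AddMonoidHom.mk' (fun x => toHom (g x) p) (fun a b => by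
    rw [map_add]; rfl))
  map_add' p q := hom_ext fun x => (toHom (g x)).map_add p q
  map_smul' r p := hom_ext fun x => by
    show toHom (g x) (r • p) = toHom (g (MulOpposite.op r • x)) p
    rw [g.map_smul]; rfl

open CharGroup in
theorem charLeft_injective (R : Type u) [Ring R] (P : ModuleCat.{u} Rᵐᵒᵖ) [hP : Projective P] :
    Injective (charLeft R P) := by
  have hP' : Module.Projective Rᵐᵒᵖ P := (IsProjective.iff_projective P).2 hP
  have : Module.Injective R (CharGroup P) := by
    refine ⟨fun X Y _ _ _ _ f hf g => ?_⟩
    let res : CharGroup Y →ₗ[Rᵐᵒᵖ] CharGroup X :=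
      { toFun := fun c => ofHom ((toHom c).comp f.toAddMonoidHom)
        map_add' := fun _ _ => rfl
        map_smul' := fun r c => hom_ext fun a => by
          show toHom c (r.unop • f a) = toHom c (f (r.unop • a))
          rw [f.map_smul] }
    have hres : Function.Surjective res := fun c => by
      obtain ⟨c', h⟩ := charExtend f.toAddMonoidHom hf (toHom c)
      exact ⟨ofHom c', hom_ext h⟩
    obtain ⟨k, hk⟩ := Module.projective_lifting_property res (charAdj R g) hres
    refine ⟨charAdj' R k, fun x => hom_ext fun p => ?_⟩
    exact congrArg (fun c => toHom c x) (LinearMap.congr_fun hk p)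
  exact Module.injective_object_of_injective_module R (CharGroup P)

open CharGroup in
theorem char_shortExact (R : Type u) [Ring R] (T : ShortComplex (ModuleCat.{u} Rᵐᵒᵖ))
    (hT : T.ShortExact) :
    ∃ h : charMap R T.g ≫ charMap R T.f = 0,
      (ShortComplex.mk (charMap R T.g) (charMap R T.f) h).ShortExact := by
  have := hT.mono_f
  have := hT.epi_g
  have hf : Function.Injective T.f.hom := (ModuleCat.mono_iff_injective T.f).1 hT.mono_f
  have hg : Function.Surjective T.g.hom := (ModuleCat.epi_iff_surjective T.g).1 hT.epi_g
  have hz : ∀ x, T.g.hom (T.f.hom x) = 0 := fun x => by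
    have := T.moduleCat_zero_apply x
    exact this
  have hex := (ShortComplex.moduleCat_exact_iff T).1 hT.exact
  have h : charMap R T.g ≫ charMap R T.f = 0 := by
    refine ModuleCat.hom_ext (LinearMap.ext fun c => hom_ext fun x => ?_)
    show toHom c (T.g.hom (T.f.hom x)) = 0
    rw [hz, map_zero]
  refine ⟨h, ShortComplex.ShortExact.mk' ?_ ?_ ?_⟩
  · rw [ShortComplex.moduleCat_exact_iff]
    intro c hc
    have hc' : ∀ x, toHom (N := T.X₂) c (T.f.hom x) = 0 := fun x =>
      congrArg (fun d => toHom (N := T.X₁) d x) hc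
    let s := Function.surjInv hg
    have hs : ∀ y, T.g.hom (s y) = y := Function.surjInv_eq hg
    have key : ∀ a b : T.X₂, T.g.hom a = T.g.hom b →
        toHom (N := T.X₂) c a = toHom (N := T.X₂) c b := fun a b hab => by
      obtain ⟨x, hx⟩ := hex (a - b) (by
        show T.g.hom (a - b) = 0
        rw [map_sub, hab, sub_self])
      have h4 := hc' x
      have hx' : T.f.hom x = a - b := hx
      rw [hx', map_sub] at h4
      exact sub_eq_zero.1 h4
    refine ⟨ofHom (AddMonoidHom.mk' (fun y => toHom (N := T.X₂) c (s y)) fun a b => ?_),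
      hom_ext (N := T.X₂) fun x => key _ _ (hs _)⟩
    rw [← map_add]
    exact key _ _ (by rw [map_add, hs, hs, hs])
  · refine (ModuleCat.mono_iff_injective _).2 fun c d hcd => hom_ext (N := T.X₃) fun y => ?_
    obtain ⟨x, rfl⟩ := hg y
    exact congrArg (fun d => toHom (N := T.X₂) d x) hcd
  · refine (ModuleCat.epi_iff_surjective _).2 fun c => ?_
    obtain ⟨c', h⟩ := charExtend T.f.hom.toAddMonoidHom hf (toHom (N := T.X₁) c)
    exact ⟨ofHom c', hom_ext (N := T.X₁) h⟩

theorem cotorsion_step (R : Type u) [Ring R] (n k : ℕ) (T : ShortComplex (ModuleCat.{u} Rᵐᵒᵖ))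
    (hT : T.ShortExact) [Injective T.X₂] (h : IsNKWeakCotorsion R n k T.X₁) :
    IsNKWeakCotorsion R n (k + 1) T.X₃ := by
  intro N hN
  obtain ⟨Q, hQ, hproj, rfl, H⟩ := exists_syzygy Rᵐᵒᵖ N
  apply H
  intro f
  have hK : nwfdLE R n k Q.X₁ := by
    intro K hK
    obtain ⟨h0, hse⟩ := char_shortExact R Q hQ
    have h1 : extVanish R (k + 2) K (charLeft R Q.X₃) := hN K hK
    have : Injective (charLeft R Q.X₂) := charLeft_injective R Q.X₂
    generalize charMap R Q.g = a at *
    generalize charMap R Q.f = b at *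
    show extVanish R (k + 1) K (charLeft R Q.X₁)
    generalize charLeft R Q.X₁ = A1 at *
    generalize charLeft R Q.X₂ = A2 at *
    generalize charLeft R Q.X₃ = A3 at *
    exact extVanish_shift R k K (ShortComplex.mk a b h0) hse h1
  obtain ⟨g, hg⟩ := lift_of_extVanish Rᵐᵒᵖ Q.X₁ T hT (h _ hK) f
  have := hQ.mono_f
  exact ⟨Injective.factorThru g Q.f ≫ T.g, by
    rw [← Category.assoc, Injective.comp_factorThru, hg]⟩

end Helpers

/-- an `m`-th cosyzygy of an `(n,k)`-weak cotorsion module is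
`(n, m+k)`-weak cotorsion. -/
theorem stmt5 (R : Type u) [Ring R] (n k m : ℕ) (M D : ModuleCat.{u} Rᵐᵒᵖ)
    (hM : IsNKWeakCotorsion R n k M) (hD : IsCosyzygy Rᵐᵒᵖ m M D) :
    IsNKWeakCotorsion R n (m + k) D := by
  induction m generalizing D with
  | zero =>
    obtain ⟨e⟩ := hD
    intro N hN
    rw [Nat.zero_add] at hN
    exact extVanish_of_iso Rᵐᵒᵖ 1 N e.toModuleIso (hM N hN)
  | succ m ih =>
    obtain ⟨C, E, hC, hE, ι, p, hι, hp, hex⟩ := hD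
    have hCt := ih C hC
    have hz : ModuleCat.ofHom ι ≫ ModuleCat.ofHom p = 0 :=
      ModuleCat.hom_ext (LinearMap.ext fun x => hex.apply_apply_eq_zero x)
    let T := ShortComplex.mk (ModuleCat.ofHom ι) (ModuleCat.ofHom p) hz
    have hT : T.ShortExact := ShortComplex.ShortExact.mk'
      ((ShortComplex.moduleCat_exact_iff T).2 fun x hx => (hex x).1 hx)
      ((ModuleCat.mono_iff_injective _).2 hι) ((ModuleCat.epi_iff_surjective _).2 hp)
    have : Injective T.X₂ := Module.injective_object_of_injective_module Rᵐᵒᵖ E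
    have := cotorsion_step R n (m + k) T hT hCt
    rw [Nat.add_right_comm]
    exact this
end

section
/- If N is a right R-module such that Ext^1_R(N, M) = 0 for every right R-module M of n-weak flat dimension at most k, then Tor^R_1(A, N) = 0 for every left R-module A of n-weak injective dimension at most k. -/
/-!
Common definitions for formalizing "(n,k)-weak cotorsion modules" over an arbitrary
(not necessarily commutative) ring `R`.  Left `R`-modules are objects of
`ModuleCat R`, right `R`-modules are objects of `ModuleCat Rᵐᵒᵖ`.

Since Mathlib does not provide `Tor` of a right module with a left module over a
noncommutative ring, we encode the vanishing of `Tor_i^R(N, M)` (for `N` a right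
module and `M` a left module) by the equivalent condition
`Ext^i_{Rᵐᵒᵖ}(N, M⋆) = 0`, where `M⋆ = Hom_ℤ(M, ℚ/ℤ)` is the character module
(a right module).  This is equivalent because `ℚ/ℤ` is an injective cogenerator:
`Ext^i_{Rᵐᵒᵖ}(N, M⋆) ≅ (Tor_i^R(N, M))⋆`, and an abelian group vanishes iff its
character group does.
-/

open CategoryTheory

universe u

theorem extVanish_iff_res {S : Type u} [Ring S] {X : ModuleCat.{u} S} (P : ProjectiveResolution X)
    (i : ℕ) (Y : ModuleCat.{u} S) :
    extVanish S (i + 1) X Y ↔ ∀ f : P.complex.X (i + 1) ⟶ Y, P.complex.d (i + 2) (i + 1) ≫ f = 0 →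
      ∃ g : P.complex.X i ⟶ Y, P.complex.d (i + 1) i ≫ g = f := by
  have e := P.isoExt (R := ℤ) (i + 1) Y
  have h1 : extVanish S (i + 1) X Y ↔
      (P.complex.linearYonedaObj ℤ Y).ExactAt (i + 1) := by
    rw [HomologicalComplex.exactAt_iff_isZero_homology, ← e.isZero_iff,
      ModuleCat.isZero_iff_subsingleton]
    rfl
  rw [h1, HomologicalComplex.exactAt_iff' _ i (i + 1) (i + 2) (by simp) (by simp),
    ShortComplex.moduleCat_exact_iff]
  rfl

theorem exists_res {S : Type u} [Ring S] (X : ModuleCat.{u} S) (F : ℕ → ModuleCat.{u} S)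
    (d : ∀ i, F (i + 1) →ₗ[S] F i) (π : F 0 →ₗ[S] X)
    (hp : ∀ i, Module.Projective S (F i)) (hs : Function.Surjective π)
    (h0 : Function.Exact (d 0) π) (h : ∀ i, Function.Exact (d (i + 1)) (d i)) 
    (i : ℕ) (Y : ModuleCat.{u} S) :
    extVanish S (i + 1) X Y ↔ ∀ f : F (i + 1) →ₗ[S] Y, f ∘ₗ d (i + 1) = 0 →
      ∃ g : F i →ₗ[S] Y, g ∘ₗ d i = f := by
  let C : ChainComplex (ModuleCat.{u} S) ℕ :=
    ChainComplex.of F (fun i => ModuleCat.ofHom (d i)) (fun i => by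
      rw [← ModuleCat.ofHom_comp, (h i).linearMap_comp_eq_zero]; rfl)
  have hd : ∀ i, C.d (i + 1) i = ModuleCat.ofHom (d i) := fun i => ChainComplex.of_d F (fun i => ModuleCat.ofHom (d i)) i
  have hw : C.d 1 0 ≫ (ModuleCat.ofHom π : C.X 0 ⟶ X) = 0 := by
    rw [hd 0]
    exact (ModuleCat.ofHom_comp _ _).symm.trans (by rw [h0.linearMap_comp_eq_zero]; rfl)
  let P : ProjectiveResolution X :=
    { complex := C
      projective := fun n => (IsProjective.iff_projective (F n)).1 (hp n)
      π := (ChainComplex.toSingle₀Equiv _ _).symm ⟨(ModuleCat.ofHom π : C.X 0 ⟶ X), hw⟩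
      quasiIso := ⟨fun n => by
        cases n with
        | zero =>
          rw [ChainComplex.quasiIsoAt₀_iff, ShortComplex.quasiIso_iff_of_zeros']
          · have hex : (ShortComplex.mk (C.d 1 0) (ModuleCat.ofHom π : C.X 0 ⟶ X) hw).Exact ∧
              Epi (ShortComplex.mk (C.d 1 0) (ModuleCat.ofHom π : C.X 0 ⟶ X) hw).g := by
              constructor
              · rw [ShortComplex.ShortExact.moduleCat_exact_iff_function_exact]
                change Function.Exact (C.d 1 0).hom π
                have hd0 : (C.d 1 0).hom = d 0 := congrArg ModuleCat.Hom.hom (hd 0)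
                rw [hd0]
                exact h0
              · exact (ModuleCat.epi_iff_surjective _).2 hs
            refine (ShortComplex.exact_and_epi_g_iff_of_iso ?_).2 hex
            refine ShortComplex.isoMk (Iso.refl _) (Iso.refl _) (Iso.refl _) ?_ ?_
            · exact (Category.id_comp (C.d 1 0)).trans (Category.comp_id (C.d 1 0)).symm
            · simp
              rfl
          all_goals rfl
        | succ n =>
          rw [quasiIsoAt_iff_exactAt']
          · rw [HomologicalComplex.exactAt_iff' _ (n + 2) (n + 1) n (by simp) (by simp),
              ShortComplex.ShortExact.moduleCat_exact_iff_function_exact]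
            change Function.Exact (C.d (n + 2) (n + 1)) (C.d (n + 1) n)
            rw [hd, hd]
            exact h n
          · apply ChainComplex.exactAt_succ_single_obj⟩ }
  rw [extVanish_iff_res P]
  change (∀ f : F (i + 1) ⟶ Y, C.d (i + 2) (i + 1) ≫ f = 0 →
      ∃ g : F i ⟶ Y, C.d (i + 1) i ≫ g = f) ↔ _
  constructor
  · intro H f hf
    obtain ⟨g, hg⟩ := H (ModuleCat.ofHom f) (by
      rw [hd]; exact (ModuleCat.ofHom_comp _ _).symm.trans (by rw [hf]; rfl))
    refine ⟨g.hom, ?_⟩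
    rw [hd] at hg
    exact congrArg ModuleCat.Hom.hom hg
  · intro H f hf
    rw [hd] at hf
    obtain ⟨g, hg⟩ := H f.hom (congrArg ModuleCat.Hom.hom hf)
    refine ⟨ModuleCat.ofHom g, ?_⟩
    rw [hd]
    exact ModuleCat.hom_ext hg

theorem exists_concrete {S : Type u} [Ring S] (X : ModuleCat.{u} S) :
    ∃ (F : ℕ → ModuleCat.{u} S) (d : ∀ i, F (i + 1) →ₗ[S] F i) (π : F 0 →ₗ[S] X),
    (∀ i, Module.Projective S (F i)) ∧ Function.Surjective π ∧
    Function.Exact (d 0) π ∧ (∀ i, Function.Exact (d (i + 1)) (d i)) := by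
  let P := ProjectiveResolution.of X
  refine ⟨P.complex.X, fun i => (P.complex.d (i + 1) i).hom, (P.π.f 0).hom, fun i =>
    (IsProjective.iff_projective _).2 (P.projective i), ?_, ?_, fun i => ?_⟩
  · exact (ModuleCat.epi_iff_surjective (P.π.f 0)).1 inferInstance
  · exact (ShortComplex.ShortExact.moduleCat_exact_iff_function_exact _).1 P.exact₀
  · exact (ShortComplex.ShortExact.moduleCat_exact_iff_function_exact _).1 (P.exact_succ i)

theorem char_ext {X Y : Type u} [AddCommGroup X] [AddCommGroup Y] (i : X →+ Y)
    (c : X →+ AddCircle (1 : ℚ)) (hc : ∀ x, i x = 0 → c x = 0) :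
    ∃ e : Y →+ AddCircle (1 : ℚ), ∀ x, e (i x) = c x := by
  let q : X ⧸ i.ker →+ Y := QuotientAddGroup.kerLift i
  let c' : X ⧸ i.ker →+ AddCircle (1 : ℚ) := QuotientAddGroup.lift _ c (fun x hx => hc x hx)
  obtain ⟨e, he⟩ := CharacterModule.dual_surjective_of_injective q.toIntLinearMap
    (QuotientAddGroup.kerLift_injective i) c'
  exact ⟨e, fun x => DFunLike.congr_fun he (QuotientAddGroup.mk x)⟩

open CharGroup in
/-- flip a balanced pairing -/
noncomputable def flipL {R : Type u} [Ring R] {A N : Type u} [AddCommGroup A] [AddCommGroup N]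
    [Module R A] [Module Rᵐᵒᵖ N] (f : A →ₗ[R] CharGroup N) : N →ₗ[Rᵐᵒᵖ] CharGroup A where
  toFun n := ofHom (AddMonoidHom.mk' (fun a => toHom (f a) n) (fun a b => by
    rw [map_add]; rfl))
  map_add' x y := hom_ext fun a => map_add (toHom (f a)) x y
  map_smul' r x := hom_ext fun a => by
    change toHom (f a) (r • x) = toHom (f (r.unop • a)) x
    rw [f.map_smul]; rfl

open CharGroup in
/-- flip a balanced pairing -/
noncomputable def flipR {R : Type u} [Ring R] {A N : Type u} [AddCommGroup A] [AddCommGroup N]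
    [Module R A] [Module Rᵐᵒᵖ N] (f : N →ₗ[Rᵐᵒᵖ] CharGroup A) : A →ₗ[R] CharGroup N where
  toFun n := ofHom (AddMonoidHom.mk' (fun a => toHom (f a) n) (fun a b => by
    rw [map_add]; rfl))
  map_add' x y := hom_ext fun a => map_add (toHom (f a)) x y
  map_smul' r x := hom_ext fun a => by
    change toHom (f a) (r • x) = toHom (f (MulOpposite.op r • a)) x
    rw [f.map_smul]; rfl

open CharGroup in
/-- dual of a map of left modules -/
noncomputable def dualR {R : Type u} [Ring R] {A B : Type u} [AddCommGroup A] [AddCommGroup B]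
    [Module R A] [Module R B] (f : A →ₗ[R] B) : CharGroup B →ₗ[Rᵐᵒᵖ] CharGroup A where
  toFun c := ofHom ((toHom c).comp f.toAddMonoidHom)
  map_add' x y := rfl
  map_smul' r x := hom_ext fun a => by
    change toHom x (r.unop • f a) = toHom x (f (r.unop • a))
    rw [f.map_smul]

open CharGroup in
/-- `P⋆` is injective for `P` projective -/
theorem inj_char {R : Type u} [Ring R] {X Y P : Type u} [AddCommGroup X] [AddCommGroup Y]
    [AddCommGroup P] [Module R X] [Module R Y] [Module Rᵐᵒᵖ P] [Module.Projective Rᵐᵒᵖ P]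
    (i : X →ₗ[R] Y) (f : X →ₗ[R] CharGroup P) (hf : ∀ x, i x = 0 → f x = 0) :
    ∃ h : Y →ₗ[R] CharGroup P, ∀ x, h (i x) = f x := by
  have hr : ∀ p, flipL f p ∈ LinearMap.range (dualR i) := by
    intro p
    obtain ⟨e, he⟩ := char_ext i.toAddMonoidHom (toHom (flipL f p)) (fun x hx => by
      change toHom (f x) p = 0
      rw [hf x hx]; rfl)
    exact ⟨ofHom e, hom_ext he⟩
  obtain ⟨h, hh⟩ := Module.projective_lifting_property (dualR i).rangeRestrict
    ((flipL f).codRestrict _ hr) (LinearMap.surjective_rangeRestrict _)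
  refine ⟨flipR h, fun x => hom_ext fun p => ?_⟩
  have := congrArg Subtype.val (LinearMap.congr_fun hh p)
  exact DFunLike.congr_fun (congrArg toHom this) x

open CharGroup in
theorem part_two {R : Type u} [Ring R] (N : ModuleCat.{u} Rᵐᵒᵖ) (A : ModuleCat.{u} R)
    (h : extVanish Rᵐᵒᵖ 1 N (charRight R A)) : extVanish R 1 A (charLeft R N) := by
  obtain ⟨F, d, π, hp, hs, h0, hd⟩ := exists_concrete N
  obtain ⟨G, e, ρ, hp', hs', h0', hd'⟩ := exists_concrete A
  rw [exists_res N F d π hp hs h0 hd] at h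
  rw [exists_res A G e ρ hp' hs' h0' hd']
  intro f hf
  have := hp 0
  change G 1 →ₗ[R] CharGroup N at f
  change ∀ f : F 1 →ₗ[Rᵐᵒᵖ] CharGroup A, f ∘ₗ d 1 = 0 → 
    ∃ g : F 0 →ₗ[Rᵐᵒᵖ] CharGroup A, g ∘ₗ d 0 = f at h
  change ∃ g : G 0 →ₗ[R] CharGroup N, g ∘ₗ e 0 = f
  -- dual of a right map, pointwise
  let f' : G 1 →ₗ[R] CharGroup (F 0) := flipR (flipL f ∘ₗ π)
  have hf' : ∀ x p, toHom (f' x) p = toHom (f x) (π p) := fun _ _ => rfl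
  obtain ⟨k, hk⟩ := inj_char (e 0) f' (fun x hx => by
    obtain ⟨y, rfl⟩ := (hd' 0 x).1 hx
    have : f (e 1 y) = 0 := LinearMap.congr_fun hf y
    refine hom_ext fun p => ?_
    rw [hf']
    rw [this]; rfl)
  -- the induced map on A
  let m : G 0 →ₗ[R] CharGroup (F 1) := flipR (flipL k ∘ₗ d 0)
  have hm : ∀ x q, toHom (m x) q = toHom (k x) (d 0 q) := fun _ _ => rfl
  have hker : ∀ x, ρ x = 0 → m x = 0 := by
    intro x hx
    obtain ⟨y, rfl⟩ := (h0' x).1 hx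
    refine hom_ext fun q => ?_
    rw [hm, hk, hf', (h0 _).2 ⟨q, rfl⟩, map_zero]
    rfl
  have := hp 1
  obtain ⟨a, ha⟩ := inj_char ρ m hker
  obtain ⟨g, hg⟩ := h (flipL a) (by
    refine LinearMap.ext fun z => hom_ext fun b => ?_
    obtain ⟨x, rfl⟩ := hs' b
    change toHom (a (ρ x)) (d 1 z) = 0
    rw [ha, hm, (hd 0 _).2 ⟨z, rfl⟩, map_zero])
  have hg' : ∀ q x, toHom (g (d 0 q)) (ρ x) = toHom (k x) (d 0 q) := fun q x => by
    rw [← hm, ← ha]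
    exact DFunLike.congr_fun (congrArg toHom (LinearMap.congr_fun hg q)) (ρ x)
  let w : F 0 →ₗ[Rᵐᵒᵖ] CharGroup (G 0) := flipL k - dualR ρ ∘ₗ g
  have hw : ∀ p x, toHom (w p) x = toHom (k x) p - toHom (g p) (ρ x) := fun _ _ => rfl
  have hwk : LinearMap.ker π ≤ LinearMap.ker w := by
    intro p hp
    obtain ⟨q, rfl⟩ := (h0 p).1 hp
    refine hom_ext fun x => ?_
    rw [hw, hg', sub_self]; rfl
  let v := (LinearMap.ker π).liftQ w hwk
  let en := π.quotKerEquivOfSurjective hs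
  have hv : ∀ p, v (en.symm (π p)) = w p := fun p => by
    have : en.symm (π p) = Submodule.Quotient.mk p := by
      rw [LinearEquiv.symm_apply_eq]; rfl
    rw [this]; rfl
  refine ⟨flipR (v ∘ₗ en.symm.toLinearMap), LinearMap.ext fun y => hom_ext fun n => ?_⟩
  obtain ⟨p, rfl⟩ := hs n
  change toHom (v (en.symm (π p))) (e 0 y) = toHom (f y) (π p)
  rw [hv, hw, hk, hf', (h0' _).2 ⟨y, rfl⟩, map_zero, sub_zero]

open CharGroup in
/-- evaluation characters on `Hom(P, A)` -/
noncomputable def evc {R : Type u} [Ring R] {A P : Type u} [AddCommGroup A] [AddCommGroup P]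
    [Module R A] [Module R P] (p : P) (c : CharGroup A) : CharGroup (P →ₗ[R] A) :=
  ofHom (AddMonoidHom.mk' (fun f => toHom c (f p)) (fun f g => map_add (toHom c) (f p) (g p)))

open CharGroup in
/-- the map `Hom(P,A)⋆⋆ → Hom(P,A⋆⋆)` -/
noncomputable def theta {R : Type u} [Ring R] {A P : Type u} [AddCommGroup A] [AddCommGroup P]
    [Module R A] [Module R P] (Φ : CharGroup (CharGroup (P →ₗ[R] A))) :
    P →ₗ[R] CharGroup (CharGroup A) where
  toFun p := ofHom (AddMonoidHom.mk' (fun c => toHom Φ (evc p c)) (fun c c' => by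
    rw [← map_add]; rfl))
  map_add' p q := hom_ext fun c => by
    change toHom Φ (evc (p + q) c) = toHom Φ (evc p c) + toHom Φ (evc q c)
    rw [← map_add]
    congr 1
    refine hom_ext fun f => ?_
    change toHom c (f (p + q)) = toHom c (f p) + toHom c (f q)
    rw [map_add, map_add]
  map_smul' r p := hom_ext fun c => by
    change toHom Φ (evc (r • p) c) = toHom Φ (evc p (MulOpposite.op r • c))
    congr 1
    refine hom_ext fun f => ?_
    change toHom c (f (r • p)) = toHom c (r • f p)
    rw [map_smul]

/-- dual basis -/
theorem exists_dual {R : Type u} [Ring R] (P : Type u) [AddCommGroup P] [Module R P]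
    [Module.Finite R P] [Module.Projective R P] :
    ∃ (n : ℕ) (x : Fin n → P) (φ : Fin n → P →ₗ[R] R), ∀ p, ∑ i, φ i p • x i = p := by
  obtain ⟨n, s, hs⟩ := Module.Finite.exists_fin' R P
  obtain ⟨t, ht⟩ := Module.projective_lifting_property s LinearMap.id hs
  refine ⟨n, fun i => s (Pi.single i 1), fun i => LinearMap.proj i ∘ₗ t, fun p => ?_⟩
  have h := LinearMap.congr_fun ht p
  conv_rhs => rw [← LinearMap.id_apply (R := R) p, ← h, LinearMap.comp_apply,
    pi_eq_sum_univ' (t p)]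
  rw [map_sum]
  refine Finset.sum_congr rfl fun i _ => ?_
  rw [LinearMap.comp_apply, LinearMap.proj_apply, ← map_smul]

open CharGroup in
/-- pull back a character along `a ↦ φ(·) a` -/
noncomputable def pb {R : Type u} [Ring R] {A P : Type u} [AddCommGroup A] [AddCommGroup P]
    [Module R A] [Module R P] (φ : P →ₗ[R] R) : CharGroup (P →ₗ[R] A) →+ CharGroup A where
  toFun c := ofHom (AddMonoidHom.mk' (fun a => toHom c (φ.smulRight a)) (fun a b => by
    rw [← map_add]; congr 1; ext p; simp))
  map_zero' := rfl
  map_add' _ _ := rfl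

open CharGroup in
theorem theta_inj {R : Type u} [Ring R] {A P : Type u} [AddCommGroup A] [AddCommGroup P]
    [Module R A] [Module R P] [Module.Finite R P] [Module.Projective R P]
    (Φ : CharGroup (CharGroup (P →ₗ[R] A))) (h : theta Φ = 0) : Φ = 0 := by
  obtain ⟨n, x, φ, hx⟩ := exists_dual (R := R) P
  refine hom_ext fun c => ?_
  have hc : c = ∑ i, evc (x i) (pb (φ i) c) := by
    have key : ∀ f : P →ₗ[R] A, toHom (∑ i, evc (x i) (pb (φ i) c)) f
        = ∑ i, toHom c ((φ i).smulRight (f (x i))) := fun f => 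
      AddMonoidHom.finsetSum_apply (fun i => toHom (evc (x i) (pb (φ i) c))) Finset.univ f
    refine hom_ext fun f => ?_
    rw [key, ← map_sum]
    congr 1
    ext p
    conv_lhs => rw [← hx p]
    simp
  rw [hc, map_sum]
  refine Finset.sum_eq_zero fun i _ => ?_
  exact DFunLike.congr_fun (congrArg toHom (LinearMap.congr_fun h (x i))) (pb (φ i) c)

open CharGroup in
theorem theta_surj {R : Type u} [Ring R] {A P : Type u} [AddCommGroup A] [AddCommGroup P]
    [Module R A] [Module R P] [Module.Finite R P] [Module.Projective R P]
    (g : P →ₗ[R] CharGroup (CharGroup A)) : ∃ Φ, theta Φ = g := by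
  obtain ⟨n, x, φ, hx⟩ := exists_dual (R := R) P
  refine ⟨ofHom (∑ i, (toHom (g (x i))).comp (pb (φ i))), LinearMap.ext fun p =>
    hom_ext fun c => ?_⟩
  change (∑ i, (toHom (g (x i))).comp (pb (φ i))) (evc p c) = _
  rw [AddMonoidHom.finsetSum_apply]
  conv_rhs => rw [← hx p, map_sum]
  have key := AddMonoidHom.finsetSum_apply (fun i => toHom (g (φ i p • x i))) Finset.univ c
  refine Eq.trans ?_ key.symm
  refine Finset.sum_congr rfl fun i _ => ?_
  rw [map_smul]
  rfl

open CharGroup in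
/-- dual of an additive map -/
noncomputable def dualA {X Y : Type u} [AddCommGroup X] [AddCommGroup Y] (f : X →+ Y) :
    CharGroup Y →+ CharGroup X where
  toFun c := ofHom ((toHom c).comp f)
  map_zero' := rfl
  map_add' _ _ := rfl

open CharGroup in
theorem dual_exact {X Y Z : Type u} [AddCommGroup X] [AddCommGroup Y] [AddCommGroup Z]
    (f : X →+ Y) (g : Y →+ Z) (h : ∀ y, g y = 0 → ∃ x, f x = y) (c : CharGroup Y)
    (hc : dualA f c = 0) : ∃ e, dualA g e = c := by
  obtain ⟨e, he⟩ := char_ext g (toHom c) (fun y hy => by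
    obtain ⟨x, rfl⟩ := h y hy
    exact DFunLike.congr_fun (congrArg toHom hc) x)
  exact ⟨ofHom e, hom_ext he⟩

/-- precomposition -/
noncomputable def pre {R : Type u} [Ring R] (A : Type u) {P Q : Type u} [AddCommGroup A]
    [AddCommGroup P] [AddCommGroup Q] [Module R A] [Module R P] [Module R Q] (d : P →ₗ[R] Q) :
    (Q →ₗ[R] A) →+ (P →ₗ[R] A) where
  toFun f := f ∘ₗ d
  map_zero' := rfl
  map_add' _ _ := rfl

theorem part_one_res {R : Type u} [Ring R] (A : ModuleCat.{u} R) (F : ℕ → ModuleCat.{u} R)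
    (d : ∀ i, F (i + 1) →ₗ[R] F i) (hp : ∀ i, Module.Projective R (F i))
    (hf : ∀ i, Module.Finite R (F i)) (i : ℕ)
    (h : ∀ f : F (i + 1) →ₗ[R] A, f ∘ₗ d (i + 1) = 0 → ∃ g : F i →ₗ[R] A, g ∘ₗ d i = f)
    (f : F (i + 1) →ₗ[R] CharGroup (CharGroup A)) (hfd : f ∘ₗ d (i + 1) = 0) :
    ∃ g : F i →ₗ[R] CharGroup (CharGroup A), g ∘ₗ d i = f := by
  have := hp (i + 1)
  have := hp (i + 2)
  have := hf (i + 1)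
  have := hf (i + 2)
  obtain ⟨Φ, rfl⟩ := theta_surj f
  have h1 : dualA (dualA (pre A (d (i + 1)))) Φ = 0 := theta_inj _ hfd
  obtain ⟨Ψ, hΨ⟩ := dual_exact (dualA (pre A (d (i + 1)))) (dualA (pre A (d i)))
    (fun c hc => dual_exact (pre A (d i)) (pre A (d (i + 1))) h c hc) Φ h1
  refine ⟨theta Ψ, ?_⟩
  rw [← hΨ]
  rfl

theorem sfp_res {R : Type u} [Ring R] (n : ℕ) (K : ModuleCat.{u} R) (hK : IsSpecialSFP R n K) :
    ∃ (F : ℕ → ModuleCat.{u} R) (d : ∀ i, F (i + 1) →ₗ[R] F i) (π : F 0 →ₗ[R] K),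
    (∀ i, Module.Projective R (F i)) ∧ (∀ i, Module.Finite R (F i)) ∧ Function.Surjective π ∧
    Function.Exact (d 0) π ∧ (∀ i, Function.Exact (d (i + 1)) (d i)) := by
  obtain ⟨U, F, d, π, hp, hf, hs, h0, hd, hK⟩ := hK
  cases n with
  | zero =>
    obtain ⟨e⟩ : Nonempty (K ≃ₗ[R] U) := by simpa using hK
    refine ⟨F, d, e.symm.toLinearMap ∘ₗ π, hp, fun i => hf i (Nat.zero_le i),
      e.symm.surjective.comp hs, fun x => ?_, hd⟩
    rw [← h0 x]
    simp
  | succ n =>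
    obtain ⟨e⟩ : Nonempty (K ≃ₗ[R] LinearMap.range (d n)) := by simpa using hK
    refine ⟨fun i => F (n + 1 + i), fun i => d (n + 1 + i),
      e.symm.toLinearMap ∘ₗ (d n).rangeRestrict, fun i => hp _, fun i => hf _ (by omega),
      e.symm.surjective.comp (LinearMap.surjective_rangeRestrict _), fun x => ?_, fun i => hd _⟩
    refine Iff.trans ?_ (hd n x)
    simp only [LinearMap.comp_apply, LinearEquiv.coe_coe, LinearEquiv.map_eq_zero_iff]
    exact Subtype.ext_iff

/-- if `Ext^1(N, M) = 0` for every right module `M` of `n`-weak flat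
dimension at most `k`, then `Tor_1(A, N) = 0` for every left module `A` of `n`-weak
injective dimension at most `k`. -/
theorem stmt8 (R : Type u) [Ring R] (n k : ℕ) (N : ModuleCat.{u} Rᵐᵒᵖ)
    (hN : ∀ M : ModuleCat.{u} Rᵐᵒᵖ, nwfdLE R n k M → extVanish Rᵐᵒᵖ 1 N M) :
    ∀ A : ModuleCat.{u} R, nwidLE R n k A → torVanish R 1 N A := by
  intro A hA
  refine part_two N A (hN _ fun K hK => ?_)
  have h := hA K hK
  obtain ⟨F, d, π, hp, hf, hs, h0, hd⟩ := sfp_res n K hK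
  rw [exists_res K F d π hp hs h0 hd] at h
  change extVanish R (k + 1) K _
  rw [exists_res K F d π hp hs h0 hd]
  exact part_one_res A F d hp hf k h
end
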